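/- Let a, P1, P2 be real numbers with P2 ≥ 0 and P2 + 1 ≤ a^2 * P1. Then C(2*a^2*P1 + 2*P2) ≤ C( (2*a^2*P1 + P2) / 4 ) + C(13/3). -/

import Mathlib

/-- Gaussian capacity function: C(x) = (1/2) * log₂(1 + x). -/
noncomputable def C (x : ℝ) : ℝ := (1/2) * Real.logb 2 (1 + x)

/-!
Sums of capacities multiply the arguments of the logarithm, so a gap of `C (13 / 3)` is a factor
`16 / 3` between `1 + SNR` terms. This factor is the limit of
`(1 + 2 * s + 2 * p) / (1 + (2 * s + p) / 4)` along `p = s → ∞`, where `s = a ^ 2 * P1` and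
`p = P2`; the constant terms leave room for `p` to exceed `s` by `13 / 2`.
-/

theorem C_le_C_iff {x y : ℝ} (hx : -1 < x) (hy : -1 < y) : C x ≤ C y ↔ x ≤ y := by
  unfold C
  rw [mul_le_mul_iff_right₀ one_half_pos,
    Real.logb_le_logb one_lt_two (by linarith) (by linarith), add_le_add_iff_left]

theorem C_add_C {x y : ℝ} (hx : x ≠ -1) (hy : y ≠ -1) : C x + C y = C (x + y + x * y) := by
  have one_add_ne_zero {z : ℝ} (hz : z ≠ -1) : 1 + z ≠ 0 :=
    fun h ↦ hz (eq_neg_of_add_eq_zero_right h)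
  have one_add_mul_one_add : 1 + (x + y + x * y) = (1 + x) * (1 + y) := by ring
  unfold C
  rw [one_add_mul_one_add, Real.logb_mul (one_add_ne_zero hx) (one_add_ne_zero hy), mul_add]

theorem stmt_17_general (a P1 P2 : ℝ) (hupper : -1 < 2 * a ^ 2 * P1 + 2 * P2)
    (hrate : -1 < (2 * a ^ 2 * P1 + P2) / 4) :
    C (2 * a ^ 2 * P1 + 2 * P2) ≤ C ((2 * a ^ 2 * P1 + P2) / 4) + C (13 / 3) ↔
      P2 ≤ a ^ 2 * P1 + 13 / 2 := by
  rw [C_add_C hrate.ne' (by norm_num), C_le_C_iff hupper (by linarith)]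
  constructor <;> intro h <;> linarith

theorem stmt_17 (a P1 P2 : ℝ) (hP2 : 0 ≤ P2) (h : P2 + 1 ≤ a ^ 2 * P1) :
    C (2 * a ^ 2 * P1 + 2 * P2) ≤ C ((2 * a ^ 2 * P1 + P2) / 4) + C (13 / 3) :=
  (stmt_17_general a P1 P2 (by linarith) (by linarith)).mpr (by linarith)
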